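/- Fix an integer d ≥ 2. For each i ∈ {0, …, d−2}, let (m_{k,i}) and (n_{k,i}) be sequences of integers with m_{k,i} > n_{k,i} ≥ 1 and m_{k,i} → ∞ as k → ∞, and set A_{k,i} := {θ ∈ ℝ/ℤ : d^{m_{k,i}}·θ = d^{n_{k,i}}·θ and d^{m_{k,i}−n_{k,i}}·θ ≠ θ}. Then the product of the uniform probability measures on the finite sets A_{k,0} × ⋯ × A_{k,d−2} ⊆ (ℝ/ℤ)^{d−1} converges weakly, as k → ∞, to the product measure λ^{⊗(d−1)}, where λ is the Haar probability measure on ℝ/ℤ. -/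

import Mathlib

/-!
By continuity of finite products of probability measures it suffices to treat one coordinate, and
there Weyl's criterion reduces equidistribution to the decay of the nontrivial Fourier
coefficients. The set in question is a difference `H \ K` of finite subgroups of the circle. If the
sum of the character `e(jθ)` over a finite subgroup is not zero, then `j` annihilates the subgroup,
which therefore has at most `|j|` elements; so the sum is bounded by `|j|` in every case. Hence the
`j`-th Fourier coefficient of the uniform measure on `H \ K` is at most `2|j| / Card (H \ K)`, while
`Card (H \ K) = (d ^ n - 1) * (d ^ (m - n) - 1) ≥ m - 1` tends to infinity.
-/

open MeasureTheory Filter Topology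
open scoped ENNReal

/-- The uniform probability measure on a (nonempty finite) subset `S` of a measurable
space: `(1/Card S) · Σ_{x ∈ S} δ_x`. -/
noncomputable def uniformOn {X : Type*} [MeasurableSpace X] (S : Set X) : Measure X :=
  (Nat.card S : ℝ≥0∞)⁻¹ • Measure.sum (fun x : S => Measure.dirac (x : X))

/-- Weak convergence of a sequence of measures: convergence of integrals of every
bounded continuous real-valued function. -/
def WeakTendsto {X : Type*} [TopologicalSpace X] [MeasurableSpace X]
    (μ : ℕ → Measure X) (ν : Measure X) : Prop :=
  ∀ g : BoundedContinuousFunction X ℝ,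
    Tendsto (fun n => ∫ x, g x ∂(μ n)) atTop (𝓝 (∫ x, g x ∂ν))

section WeakConvergence

theorem weakTendsto_iff_tendsto {X : Type*} [TopologicalSpace X] [MeasurableSpace X]
    [OpensMeasurableSpace X] {μ : ℕ → ProbabilityMeasure X} {ν : ProbabilityMeasure X} :
    WeakTendsto (fun k => (μ k : Measure X)) ν ↔ Tendsto μ atTop (𝓝 ν) :=
  ProbabilityMeasure.tendsto_iff_forall_integral_tendsto.symm

theorem WeakTendsto.pi {ι : Type*} [Fintype ι] {X : ι → Type*} [∀ i, TopologicalSpace (X i)]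
    [∀ i, SecondCountableTopology (X i)] [∀ i, TopologicalSpace.PseudoMetrizableSpace (X i)]
    [∀ i, MeasurableSpace (X i)] [∀ i, OpensMeasurableSpace (X i)]
    {μ : ∀ i, ℕ → Measure (X i)} [∀ i k, IsProbabilityMeasure (μ i k)]
    {ν : ∀ i, Measure (X i)} [∀ i, IsProbabilityMeasure (ν i)]
    (h : ∀ i, WeakTendsto (μ i) (ν i)) :
    WeakTendsto (fun k => Measure.pi fun i => μ i k) (Measure.pi ν) := by
  let μ' (k : ℕ) (i : ι) : ProbabilityMeasure (X i) := ⟨μ i k, inferInstance⟩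
  let ν' (i : ι) : ProbabilityMeasure (X i) := ⟨ν i, inferInstance⟩
  have hμ' : Tendsto μ' atTop (𝓝 ν') :=
    tendsto_pi_nhds.mpr fun i => weakTendsto_iff_tendsto.mp (h i)
  exact weakTendsto_iff_tendsto.mpr ((ProbabilityMeasure.continuous_pi.tendsto ν').comp hμ')

variable {X 𝕜 : Type*} [TopologicalSpace X] [CompactSpace X] [MeasurableSpace X]
  [OpensMeasurableSpace X] [RCLike 𝕜]

theorem integrable_continuousMap (μ : Measure X) [IsFiniteMeasure μ] (f : C(X, 𝕜)) :
    Integrable f μ :=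
  (BoundedContinuousFunction.mkOfCompact f).integrable μ

theorem lipschitzWith_integral_continuousMap (μ : Measure X) [IsProbabilityMeasure μ] :
    LipschitzWith 1 fun f : C(X, 𝕜) => ∫ x, f x ∂μ := by
  refine LipschitzWith.of_dist_le_mul fun f g => ?_
  rw [NNReal.coe_one, one_mul, dist_eq_norm,
    ← integral_sub (integrable_continuousMap μ f) (integrable_continuousMap μ g)]
  refine (norm_integral_le_of_norm_le_const (C := dist f g) (.of_forall fun x => ?_)).trans_eq
    (by simp)
  rw [← dist_eq_norm]
  exact ContinuousMap.dist_apply_le_dist x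

theorem tendsto_integral_of_dense_span {κ : Type*} {l : Filter κ} {μ : κ → Measure X}
    [∀ k, IsProbabilityMeasure (μ k)] {ν : Measure X} [IsProbabilityMeasure ν] {S : Set C(X, 𝕜)}
    (hS : (Submodule.span 𝕜 S).topologicalClosure = ⊤)
    (h : ∀ f ∈ S, Tendsto (fun k => ∫ x, f x ∂(μ k)) l (𝓝 (∫ x, f x ∂ν))) (f : C(X, 𝕜)) :
    Tendsto (fun k => ∫ x, f x ∂(μ k)) l (𝓝 (∫ x, f x ∂ν)) := by
  let C : Set C(X, 𝕜) := {g | Tendsto (fun k => ∫ x, g x ∂(μ k)) l (𝓝 (∫ x, g x ∂ν))}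
  have hC_closed : IsClosed C :=
    (LipschitzWith.uniformEquicontinuous _ 1 fun k =>
      lipschitzWith_integral_continuousMap (μ k)).equicontinuous.isClosed_setOfPred_tendsto
        (lipschitzWith_integral_continuousMap ν).continuous
  have hspan : (Submodule.span 𝕜 S : Set C(X, 𝕜)) ⊆ C := by
    intro g hg
    induction hg using Submodule.span_induction with
    | mem g hg => exact h g hg
    | zero => simpa [C] using tendsto_const_nhds
    | add g₁ g₂ _ _ h₁ h₂ =>
      simpa only [C, Set.mem_ofPred_eq, ContinuousMap.add_apply,
        integral_add (integrable_continuousMap _ g₁) (integrable_continuousMap _ g₂)]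
        using h₁.add h₂
    | smul c g _ hg =>
      simpa only [C, Set.mem_ofPred_eq, ContinuousMap.smul_apply, integral_smul]
        using hg.const_smul c
  have hf : f ∈ closure (Submodule.span 𝕜 S : Set C(X, 𝕜)) := by
    rw [← Submodule.topologicalClosure_coe, hS]
    trivial
  exact closure_minimal hspan hC_closed hf

end WeakConvergence

section UniformOn

variable {X : Type*} [MeasurableSpace X] {S : Set X}

theorem isProbabilityMeasure_uniformOn (hfin : S.Finite) (hne : S.Nonempty) :
    IsProbabilityMeasure (uniformOn S) := by
  have := hfin.to_subtype
  have := hne.to_subtype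
  refine ⟨?_⟩
  rw [uniformOn, Measure.smul_apply, Measure.sum_apply _ MeasurableSet.univ, smul_eq_mul]
  simp only [measure_univ, ENNReal.tsum_one, ENat.card_eq_coe_natCard, ENat.toENNReal_coe]
  exact ENNReal.inv_mul_cancel (Nat.cast_ne_zero.mpr Nat.card_pos.ne') (ENNReal.natCast_ne_top _)

theorem integral_uniformOn [MeasurableSingletonClass X] {E : Type*} [NormedAddCommGroup E]
    [NormedSpace ℝ E] [CompleteSpace E] (hfin : S.Finite) (f : X → E) :
    ∫ x, f x ∂(uniformOn S) = (S.ncard : ℝ)⁻¹ • ∑ᶠ x ∈ S, f x := by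
  have := hfin.fintype
  rw [uniformOn, integral_smul_measure, Measure.sum_fintype,
    integral_finsetSum_measure fun x _ => integrable_dirac (by simp [enorm_lt_top])]
  simp only [integral_dirac, ENNReal.toReal_inv, ENNReal.toReal_natCast, Nat.card_coe_set_eq]
  rw [← finsum_eq_sum_of_fintype, finsum_set_coe_eq_finsum_mem]

end UniformOn

section Circle

variable {T : ℝ}

/-- The character `θ ↦ exp (2πijθ / T)` of the circle `ℝ / Tℤ`, as an additive character, so that
its sum over a finite subgroup can be computed by orthogonality. -/
noncomputable def fourierAddChar (j : ℤ) : AddChar (AddCircle T) ℂ where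
  toFun := fourier j
  map_zero_eq_one' := fourier_eval_zero j
  map_add_eq_mul' x y := by
    simp only [fourier_apply, smul_add, AddCircle.toCircle_add, Circle.coe_mul]

theorem finite_torsionBy_addCircle {N : ℤ} (hN : N ≠ 0) :
    Finite (AddSubgroup.torsionBy (AddCircle T) N) :=
  AddCircle.finite_torsion_of_isSMulRegular_int T N (.of_ne_zero hN)

variable [Fact (0 < T)]

theorem integral_fourier_of_ne_zero {j : ℤ} (hj : j ≠ 0) :
    ∫ θ : AddCircle T, fourier j θ ∂AddCircle.haarAddCircle = 0 :=
  integral_eq_zero_of_add_right_eq_neg (fourier_add_half_inv_index hj Fact.out)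

theorem volume_unitAddCircle_eq_haarAddCircle :
    (volume : Measure UnitAddCircle) = AddCircle.haarAddCircle := by
  rw [AddCircle.volume_eq_smul_haarAddCircle, ENNReal.ofReal_one, one_smul]

theorem weakTendsto_haarAddCircle_of_tendsto_fourier {μ : ℕ → Measure (AddCircle T)}
    [∀ k, IsProbabilityMeasure (μ k)]
    (h : ∀ j : ℤ, j ≠ 0 → Tendsto (fun k => ∫ θ, fourier j θ ∂(μ k)) atTop (𝓝 0)) :
    WeakTendsto μ AddCircle.haarAddCircle := by
  have hfourier : ∀ f ∈ Set.range (fourier (T := T)), Tendsto (fun k => ∫ θ, f θ ∂(μ k)) atTop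
      (𝓝 (∫ θ, f θ ∂AddCircle.haarAddCircle)) := by
    rintro _ ⟨j, rfl⟩
    rcases eq_or_ne j 0 with rfl | hj
    · simp
    · simpa only [integral_fourier_of_ne_zero hj] using h j hj
  let μ' (k : ℕ) : ProbabilityMeasure (AddCircle T) := ⟨μ k, inferInstance⟩
  let ν' : ProbabilityMeasure (AddCircle T) := ⟨AddCircle.haarAddCircle, inferInstance⟩
  have hμ' : Tendsto μ' atTop (𝓝 ν') :=
    (ProbabilityMeasure.tendsto_iff_forall_integral_rclike_tendsto ℂ).mpr fun f =>
      tendsto_integral_of_dense_span span_fourier_closure_eq_top hfourier f.toContinuousMap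
  exact weakTendsto_iff_tendsto.mpr hμ'

theorem card_torsionBy_addCircle {N : ℤ} (hN : N ≠ 0) :
    Nat.card (AddSubgroup.torsionBy (AddCircle T) N) = N.natAbs := by
  have := finite_torsionBy_addCircle (T := T) hN
  let ζ : AddCircle T := ((T / N.natAbs : ℝ) : AddCircle T)
  have hζ : addOrderOf ζ = N.natAbs := AddCircle.addOrderOf_period_div (Int.natAbs_pos.mpr hN)
  have hζN : N • ζ = 0 := natAbs_nsmul_eq_zero.mp (hζ ▸ addOrderOf_nsmul_eq_zero ζ)
  refine le_antisymm ?_ ?_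
  · have hle := AddCircle.card_torsion_le_of_isSMulRegular_int T N hN (.of_ne_zero hN)
    exact ENat.toNat_le_of_le_natCast hle
  · rw [← hζ, ← Nat.card_zmultiples]
    exact AddSubgroup.card_le_of_le
      (AddSubgroup.zmultiples_le_of_mem ((Submodule.mem_torsionBy_iff _ _).mpr hζN))

theorem norm_finsum_fourier_addSubgroup_le (H : AddSubgroup (AddCircle T)) [Finite H] {j : ℤ}
    (hj : j ≠ 0) : ‖∑ᶠ θ ∈ (H : Set (AddCircle T)), fourier j θ‖ ≤ j.natAbs := by
  classical
  have := Fintype.ofFinite H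
  let ψ : AddChar H ℂ := (fourierAddChar j).compAddMonoidHom H.subtype
  have hsum : ∑ᶠ θ ∈ (H : Set (AddCircle T)), (fourier j θ : ℂ) =
      if ψ = 0 then (Fintype.card H : ℂ) else 0 := by
    rw [← AddChar.sum_eq_ite, ← finsum_eq_sum_of_fintype, ← finsum_set_coe_eq_finsum_mem]
    rfl
  rw [hsum]
  split_ifs with hψ
  · have hH : H ≤ AddSubgroup.torsionBy (AddCircle T) j := by
      intro θ hθ
      have hone : (fourier j θ : ℂ) = 1 := DFunLike.congr_fun hψ ⟨θ, hθ⟩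
      rw [fourier_apply, Circle.coe_eq_one, ← AddCircle.toCircle_zero (T := T)] at hone
      exact AddCircle.injective_toCircle (Fact.out : 0 < T).ne' hone
    have := finite_torsionBy_addCircle (T := T) hj
    rw [Complex.norm_natCast, ← Nat.card_eq_fintype_card, Nat.cast_le,
      ← card_torsionBy_addCircle (T := T) hj]
    exact AddSubgroup.card_le_of_le hH
  · simp

theorem norm_integral_fourier_uniformOn_sdiff_le (H K : AddSubgroup (AddCircle T)) [Finite H]
    {j : ℤ} (hj : j ≠ 0) :
    ‖∫ θ, fourier j θ ∂(uniformOn ((H : Set (AddCircle T)) \ K))‖ ≤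
      2 * j.natAbs / ((H : Set (AddCircle T)) \ K).ncard := by
  have hfin : (H : Set (AddCircle T)).Finite := Set.toFinite _
  have : Finite ↥(H ⊓ K) := (hfin.inter_of_left K).to_subtype
  have hsub := finsum_mem_inter_add_sdiff (f := fun θ => (fourier j θ : ℂ)) K hfin
  have hHK := norm_finsum_fourier_addSubgroup_le (H ⊓ K) hj
  have hH := norm_finsum_fourier_addSubgroup_le H hj
  rw [AddSubgroup.coe_inf] at hHK
  rw [integral_uniformOn hfin.sdiff, ← sub_eq_of_eq_add' hsub.symm, norm_smul, norm_inv,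
    RCLike.norm_natCast, div_eq_inv_mul, two_mul]
  gcongr
  exact (norm_sub_le _ _).trans (add_le_add hH hHK)

theorem weakTendsto_uniformOn_sdiff {H K : ℕ → AddSubgroup (AddCircle T)} [∀ k, Finite (H k)]
    (hne : ∀ k, ((H k : Set (AddCircle T)) \ K k).Nonempty)
    (hcard : Tendsto (fun k => ((H k : Set (AddCircle T)) \ K k).ncard) atTop atTop) :
    WeakTendsto (fun k => uniformOn ((H k : Set (AddCircle T)) \ K k))
      AddCircle.haarAddCircle := by
  have (k : ℕ) := isProbabilityMeasure_uniformOn (Set.toFinite _) (hne k)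
  refine weakTendsto_haarAddCircle_of_tendsto_fourier fun j hj => ?_
  exact squeeze_zero_norm (fun k => norm_integral_fourier_uniformOn_sdiff_le (H k) (K k) hj)
    ((tendsto_natCast_atTop_atTop.comp hcard).const_div_atTop _)

end Circle

section Preperiodic

/-- The points of `G` whose orbit under `x ↦ d • x` reaches, after at most `n` steps, a cycle of
length dividing `m - n`, but which do not lie on that cycle themselves. -/
def strictlyPreperiodicPts (G : Type*) [AddMonoid G] (d m n : ℕ) : Set G :=
  {x | (d ^ m) • x = (d ^ n) • x ∧ (d ^ (m - n)) • x ≠ x}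

theorem strictlyPreperiodicPts_eq_torsionBy_sdiff (G : Type*) [AddCommGroup G] (d m n : ℕ) :
    strictlyPreperiodicPts G d m n =
      (AddSubgroup.torsionBy G ((d : ℤ) ^ m - (d : ℤ) ^ n) : Set G) \
        AddSubgroup.torsionBy G ((d : ℤ) ^ (m - n) - 1) := by
  ext x
  have hpow (k : ℕ) : ((d : ℤ) ^ k) • x = (d ^ k) • x := by
    rw [← Nat.cast_pow, natCast_zsmul]
  simp [strictlyPreperiodicPts, sub_smul, hpow, sub_eq_zero]

variable {T : ℝ} [Fact (0 < T)]

theorem ncard_strictlyPreperiodicPts_addCircle {d m n : ℕ} (hd : 2 ≤ d) (hnm : n < m) :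
    (strictlyPreperiodicPts (AddCircle T) d m n).ncard = (d ^ n - 1) * (d ^ (m - n) - 1) := by
  have hpow : 1 < d ^ (m - n) := Nat.one_lt_pow (Nat.sub_ne_zero_of_lt hnm) hd
  have hK : (d : ℤ) ^ (m - n) - 1 = (d ^ (m - n) - 1 : ℕ) := by
    rw [Nat.cast_sub hpow.le, Nat.cast_pow, Nat.cast_one]
  have hH : (d : ℤ) ^ m - (d : ℤ) ^ n = (d ^ n * (d ^ (m - n) - 1) : ℕ) := by
    rw [Nat.cast_mul, ← hK, mul_sub, mul_one, Nat.cast_pow, ← pow_add, Nat.add_sub_cancel' hnm.le]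
  have hK₀ : ((d ^ (m - n) - 1 : ℕ) : ℤ) ≠ 0 := by lia
  have hH₀ : ((d ^ n * (d ^ (m - n) - 1) : ℕ) : ℤ) ≠ 0 := by
    rw [Nat.cast_mul]
    exact mul_ne_zero (by positivity) hK₀
  have := finite_torsionBy_addCircle (T := T) hK₀
  rw [strictlyPreperiodicPts_eq_torsionBy_sdiff, hH, hK, Set.ncard_sdiff, ← Nat.card_coe_set_eq,
    ← Nat.card_coe_set_eq]
  · rw [SetLike.coe_sort_coe, SetLike.coe_sort_coe, card_torsionBy_addCircle hH₀,
      card_torsionBy_addCircle hK₀, Int.natAbs_natCast, Int.natAbs_natCast, Nat.sub_one_mul]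
  · exact Submodule.torsionBy_le_torsionBy_of_dvd _ _ (by simp)

theorem sub_one_le_ncard_strictlyPreperiodicPts_addCircle {d m n : ℕ} (hd : 2 ≤ d) (hn : 1 ≤ n)
    (hnm : n < m) : m - 1 ≤ (strictlyPreperiodicPts (AddCircle T) d m n).ncard := by
  have hdn : n ≤ d ^ n - 1 := Nat.le_sub_one_of_lt (Nat.lt_pow_self hd)
  have hdp : m - n ≤ d ^ (m - n) - 1 := Nat.le_sub_one_of_lt (Nat.lt_pow_self hd)
  calc m - 1 ≤ n * (m - n) := by
        obtain ⟨a, rfl⟩ := Nat.exists_eq_add_of_le hn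
        obtain ⟨b, rfl⟩ := Nat.exists_eq_add_of_lt hnm
        rw [show 1 + a + b + 1 - (1 + a) = b + 1 by lia]
        lia
    _ ≤ (d ^ n - 1) * (d ^ (m - n) - 1) := Nat.mul_le_mul hdn hdp
    _ = (strictlyPreperiodicPts (AddCircle T) d m n).ncard :=
        (ncard_strictlyPreperiodicPts_addCircle hd hnm).symm

theorem ncard_strictlyPreperiodicPts_addCircle_ne_zero {d m n : ℕ} (hd : 2 ≤ d) (hn : 1 ≤ n)
    (hnm : n < m) : (strictlyPreperiodicPts (AddCircle T) d m n).ncard ≠ 0 := by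
  have := sub_one_le_ncard_strictlyPreperiodicPts_addCircle (T := T) hd hn hnm
  lia

theorem isProbabilityMeasure_uniformOn_strictlyPreperiodicPts {d m n : ℕ} (hd : 2 ≤ d)
    (hn : 1 ≤ n) (hnm : n < m) :
    IsProbabilityMeasure (uniformOn (strictlyPreperiodicPts (AddCircle T) d m n)) :=
  have hcard := ncard_strictlyPreperiodicPts_addCircle_ne_zero hd hn hnm
  isProbabilityMeasure_uniformOn (Set.finite_of_ncard_ne_zero hcard)
    (Set.nonempty_of_ncard_ne_zero hcard)

theorem weakTendsto_uniformOn_strictlyPreperiodicPts {d m n : ℕ → ℕ} (hd : ∀ k, 2 ≤ d k)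
    (hn : ∀ k, 1 ≤ n k) (hnm : ∀ k, n k < m k) (hm : Tendsto m atTop atTop) :
    WeakTendsto (fun k => uniformOn (strictlyPreperiodicPts (AddCircle T) (d k) (m k) (n k)))
      AddCircle.haarAddCircle := by
  have (k : ℕ) : Finite (AddSubgroup.torsionBy (AddCircle T) ((d k : ℤ) ^ m k - (d k : ℤ) ^ n k)) :=
    finite_torsionBy_addCircle
      (sub_pos.mpr (pow_lt_pow_right₀ (by exact_mod_cast hd k) (hnm k))).ne'
  have hne (k : ℕ) : (strictlyPreperiodicPts (AddCircle T) (d k) (m k) (n k)).Nonempty :=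
    Set.nonempty_of_ncard_ne_zero
      (ncard_strictlyPreperiodicPts_addCircle_ne_zero (hd k) (hn k) (hnm k))
  have hcard : Tendsto (fun k => (strictlyPreperiodicPts (AddCircle T) (d k) (m k) (n k)).ncard)
      atTop atTop :=
    tendsto_atTop_mono
      (fun k => sub_one_le_ncard_strictlyPreperiodicPts_addCircle (hd k) (hn k) (hnm k))
      ((tendsto_sub_atTop_nat 1).comp hm)
  simp only [strictlyPreperiodicPts_eq_torsionBy_sdiff] at hne hcard ⊢
  exact weakTendsto_uniformOn_sdiff hne hcard

end Preperiodic

theorem misiurewicz_product_equidistribute_general {ι : Type*} [Fintype ι] {d m n : ι → ℕ → ℕ}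
    (hd : ∀ i k, 2 ≤ d i k) (hn : ∀ i k, 1 ≤ n i k) (hnm : ∀ i k, n i k < m i k)
    (hm : ∀ i, Tendsto (m i) atTop atTop) :
    WeakTendsto
      (fun k => Measure.pi fun i =>
        uniformOn (strictlyPreperiodicPts UnitAddCircle (d i k) (m i k) (n i k)))
      (Measure.pi fun _ : ι => (volume : Measure UnitAddCircle)) := by
  have (i : ι) (k : ℕ) :=
    isProbabilityMeasure_uniformOn_strictlyPreperiodicPts (T := 1) (hd i k) (hn i k) (hnm i k)
  rw [volume_unitAddCircle_eq_haarAddCircle]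
  exact WeakTendsto.pi fun i =>
    weakTendsto_uniformOn_strictlyPreperiodicPts (hd i) (hn i) (hnm i) (hm i)

/-- For `d ≥ 2` and, for each coordinate `i ∈ {0,…,d−2}`, sequences
`m i k > n i k ≥ 1` with `m i k → ∞`, the products of the uniform probability measures
on the sets `A i k = {θ : d^(m i k)·θ = d^(n i k)·θ, d^(m i k − n i k)·θ ≠ θ}` converge
weakly to the `(d−1)`-fold product of the Haar probability measure on `ℝ/ℤ`. -/
theorem misiurewicz_product_equidistribute (d : ℕ) (hd : 2 ≤ d)
    (m n : Fin (d - 1) → ℕ → ℕ)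
    (hn : ∀ i k, 1 ≤ n i k) (hnm : ∀ i k, n i k < m i k)
    (hm : ∀ i, Tendsto (m i) atTop atTop)
    (A : Fin (d - 1) → ℕ → Set UnitAddCircle)
    (hA : ∀ i k, A i k =
      {θ : UnitAddCircle |
        (d ^ m i k) • θ = (d ^ n i k) • θ ∧ (d ^ (m i k - n i k)) • θ ≠ θ}) :
    WeakTendsto
      (fun k => Measure.pi (fun i : Fin (d - 1) => uniformOn (A i k)))
      (Measure.pi (fun _ : Fin (d - 1) => (volume : Measure UnitAddCircle))) := by
  obtain rfl : A = fun i k => strictlyPreperiodicPts UnitAddCircle d (m i k) (n i k) := funext₂ hA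
  exact misiurewicz_product_equidistribute_general (fun _ _ => hd) hn hnm hm
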